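/- Let b ≥ 2 be an integer, s ∈ ℕ, and let a = (a_j)_{j≥1} be a nondecreasing sequence of real weights. Set n_j = #{i ∈ ℕ : i + a_j ≤ 1}, S = (b−1)·∑_{j=1}^s n_j, and C_s = exp( S + (log b)/2 + 2(b−1)s/log b ) · (1 − exp(−(log b)/2))^{−1}. Then for every digital net P over ℤ_b with dual net P^⊥ and minimal weight δ_{P^⊥} = inf_{k ∈ P^⊥ \ {0}} μ'_a(k), one has e^wor(P, W'_{s,a}) ≤ C_s · exp(−δ_{P^⊥}·(log b)/2). -/

import Mathlib

open MeasureTheory Matrix Filter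
open scoped ENNReal BigOperators Topology

noncomputable section

/-- The `b`-adic digit of `k : ℕ` at place `b^i` (i.e. the `(i+1)`-st digit). -/
def natDigit (b k i : ℕ) : ℕ := k / b ^ i % b

/-- The `(i+1)`-st `b`-adic digit of a real number `x ∈ [0,1)`
(using the expansion in which infinitely many digits differ from `b-1`). -/
def realDigit (b : ℕ) (x : ℝ) (i : ℕ) : ℕ := (⌊x * (b : ℝ) ^ (i + 1)⌋ % (b : ℤ)).toNat

/-- The `k`-th one-dimensional `b`-adic Walsh function. -/
def wal1 (b k : ℕ) (x : ℝ) : ℂ :=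
  Complex.exp (2 * Real.pi * Complex.I / (b : ℂ) *
    ((∑ i ∈ Finset.range k, natDigit b k i * realDigit b x i : ℕ) : ℂ))

/-- The `k`-th `s`-dimensional `b`-adic Walsh function. -/
def wal (b : ℕ) {s : ℕ} (k : Fin s → ℕ) (x : Fin s → ℝ) : ℂ :=
  ∏ j, wal1 b (k j) (x j)

/-- The unit cube `[0,1)^s`. -/
def unitCube (s : ℕ) : Set (Fin s → ℝ) := Set.univ.pi fun _ => Set.Ico (0 : ℝ) 1

/-- The `k`-th Walsh coefficient of `f`. -/
def walshCoeff (b : ℕ) {s : ℕ} (f : (Fin s → ℝ) → ℝ) (k : Fin s → ℕ) : ℂ :=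
  ∫ x in unitCube s, (f x : ℂ) * (starRingEnd ℂ) (wal b k x)

/-- The generalized Dick weight `μ_a(k)`, one-dimensional case. -/
def dickWt (b : ℕ) (a : ℝ) (k : ℕ) : ℝ :=
  ∑ i ∈ Finset.range k, if natDigit b k i ≠ 0 then ((i : ℝ) + 1 + a) else 0

/-- The generalized Dick weight `μ_a(k)` for vectors. -/
def dickWtV (b : ℕ) {s : ℕ} (a : Fin s → ℝ) (k : Fin s → ℕ) : ℝ :=
  ∑ j, dickWt b (a j) (k j)

/-- The modified Dick weight `μ'_a(k)`, one-dimensional case. -/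
def mdickWt (b : ℕ) (a : ℝ) (k : ℕ) : ℝ :=
  ∑ i ∈ Finset.range k, if natDigit b k i ≠ 0 then max ((i : ℝ) + 1 + a) 1 else 0

/-- The modified Dick weight `μ'_a(k)` for vectors. -/
def mdickWtV (b : ℕ) {s : ℕ} (a : Fin s → ℝ) (k : Fin s → ℕ) : ℝ :=
  ∑ j, mdickWt b (a j) (k j)

/-- Digitwise subtraction modulo `b` of natural numbers. -/
def dsub (b k k' : ℕ) : ℕ :=
  ∑ i ∈ Finset.range (k + k' + 1), ((natDigit b k i + (b - natDigit b k' i)) % b) * b ^ i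

/-- The integral of `f` over the unit cube. -/
def intBox (s : ℕ) (f : (Fin s → ℝ) → ℝ) : ℝ := ∫ x in unitCube s, f x

/-- Membership in the Walsh space `W_{s,a}`: `f` equals its (convergent) Walsh series
and has finite norm. -/
def MemW (b : ℕ) {s : ℕ} (a : Fin s → ℝ) (f : (Fin s → ℝ) → ℝ) : Prop :=
  (∀ x ∈ unitCube s, HasSum (fun k : Fin s → ℕ => walshCoeff b f k * wal b k x) ((f x : ℂ))) ∧
  BddAbove (Set.range fun k : Fin s → ℕ => ‖walshCoeff b f k‖ * (b : ℝ) ^ dickWtV b a k)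

/-- The norm of the Walsh space `W_{s,a}`. -/
def normW (b : ℕ) {s : ℕ} (a : Fin s → ℝ) (f : (Fin s → ℝ) → ℝ) : ℝ :=
  ⨆ k : Fin s → ℕ, ‖walshCoeff b f k‖ * (b : ℝ) ^ dickWtV b a k

/-- Membership in the modified Walsh space `W'_{s,a}`. -/
def MemW' (b : ℕ) {s : ℕ} (a : Fin s → ℝ) (f : (Fin s → ℝ) → ℝ) : Prop :=
  (∀ x ∈ unitCube s, HasSum (fun k : Fin s → ℕ => walshCoeff b f k * wal b k x) ((f x : ℂ))) ∧
  BddAbove (Set.range fun k : Fin s → ℕ => ‖walshCoeff b f k‖ * (b : ℝ) ^ mdickWtV b a k)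

/-- The norm of the modified Walsh space `W'_{s,a}`. -/
def normW' (b : ℕ) {s : ℕ} (a : Fin s → ℝ) (f : (Fin s → ℝ) → ℝ) : ℝ :=
  ⨆ k : Fin s → ℕ, ‖walshCoeff b f k‖ * (b : ℝ) ^ mdickWtV b a k

/-- The worst-case error of the algorithm `A` over the unit ball of `(H, N)`. -/
def worstErr (s : ℕ) (H : Set ((Fin s → ℝ) → ℝ)) (N : ((Fin s → ℝ) → ℝ) → ℝ)
    (A : ((Fin s → ℝ) → ℝ) → ℝ) : ℝ≥0∞ :=
  ⨆ (f : (Fin s → ℝ) → ℝ) (_ : f ∈ H) (_ : N f ≤ 1), ENNReal.ofReal |intBox s f - A f|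

/-- The `n`-th minimal worst-case error over all algorithms using `n` function values
at points of the unit cube. -/
def minErr (n s : ℕ) (H : Set ((Fin s → ℝ) → ℝ)) (N : ((Fin s → ℝ) → ℝ) → ℝ) : ℝ≥0∞ :=
  ⨅ (t : Fin n → Fin s → ℝ) (_ : ∀ i, t i ∈ unitCube s) (φ : (Fin n → ℝ) → ℝ),
    worstErr s H N fun f => φ fun i => f (t i)

/-- Partial derivative in the `j`-th coordinate. -/
def pd {s : ℕ} (j : Fin s) (f : (Fin s → ℝ) → ℝ) : (Fin s → ℝ) → ℝ :=
  fun x => deriv (fun t => f (Function.update x j t)) (x j)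

/-- The mixed partial derivative `f^{(α)}`. -/
def mpd {s : ℕ} (α : Fin s → ℕ) (f : (Fin s → ℝ) → ℝ) : (Fin s → ℝ) → ℝ :=
  (List.finRange s).foldr (fun j g => (pd j)^[α j] g) f

/-- Membership in the space `S_{s,u}` of smooth functions. -/
def MemS {s : ℕ} (u : Fin s → ℝ) (f : (Fin s → ℝ) → ℝ) : Prop :=
  ContDiff ℝ (⊤ : ℕ∞) f ∧
  BddAbove (Set.range fun α : Fin s → ℕ =>
    (∫ x in unitCube s, |mpd α f x|) / ∏ j, u j ^ α j)

/-- The norm of the space `S_{s,u}`. -/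
def normS {s : ℕ} (u : Fin s → ℝ) (f : (Fin s → ℝ) → ℝ) : ℝ :=
  ⨆ α : Fin s → ℕ, (∫ x in unitCube s, |mpd α f x|) / ∏ j, u j ^ α j

/-- The column vector of the first `m` `b`-adic digits of `k`. -/
def trunc (b m k : ℕ) : Fin m → ZMod b := fun i => (natDigit b k (i : ℕ) : ZMod b)

/-- The `m`-th point of the digital net determined by generating matrices `G`. -/
def netPoint (b : ℕ) {s l d : ℕ} (G : Fin s → Matrix (Fin l) (Fin d) (ZMod b)) (m : ℕ) :
    Fin s → ℝ :=
  fun j => ∑ i : Fin l, (((G j).mulVec (trunc b d m)) i).val / (b : ℝ) ^ ((i : ℕ) + 1)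

/-- The dual net of the digital net determined by `G`. -/
def dualNet (b : ℕ) {s l d : ℕ} (G : Fin s → Matrix (Fin l) (Fin d) (ZMod b)) :
    Set (Fin s → ℕ) :=
  {k | ∑ j, (G j)ᵀ.mulVec (trunc b l (k j)) = 0}

/-- The QMC algorithm given by the digital net with generating matrices `G`. -/
def qmcNet (b : ℕ) {s l d : ℕ} (G : Fin s → Matrix (Fin l) (Fin d) (ZMod b))
    (f : (Fin s → ℝ) → ℝ) : ℝ :=
  ((b : ℝ) ^ d)⁻¹ * ∑ m ∈ Finset.range (b ^ d), f (netPoint b G m)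

/-- `n_j = #{i ∈ ℕ : i + a ≤ 1}` (with `i` ranging over positive integers). -/
def negCount (a : ℝ) : ℕ := Set.ncard {i : ℕ | 0 < i ∧ (i : ℝ) + a ≤ 1}


lemma natDigit_eq_zero {b k i : ℕ} (h : k < b ^ i) : natDigit b k i = 0 := by
  simp [natDigit, Nat.div_eq_of_lt h]

lemma natDigit_lt {b : ℕ} (hb : 2 ≤ b) (k i : ℕ) : natDigit b k i < b :=
  Nat.mod_lt _ (by omega)

lemma natDigit_eq_zero' {b k i : ℕ} (hb : 2 ≤ b) (h : k ≤ i) : natDigit b k i = 0 :=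
  natDigit_eq_zero (lt_of_le_of_lt h (Nat.lt_pow_self (by omega)))

lemma sum_digits_eq {M : Type*} [AddCommMonoid M] {b : ℕ} (hb : 2 ≤ b) (k : ℕ) (f : ℕ → M) (N : ℕ)
    (hf : ∀ i, natDigit b k i = 0 → f i = 0) (hN : ∀ i, N ≤ i → f i = 0) :
    ∑ i ∈ Finset.range k, f i = ∑ i ∈ Finset.range N, f i := by
  have h1 : ∑ i ∈ Finset.range k, f i = ∑ i ∈ Finset.range (max k N), f i := by
    apply Finset.sum_subset (by simp)
    intro i _ hi
    simp only [Finset.mem_range, not_lt] at hi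
    exact hf i (natDigit_eq_zero' hb hi)
  rw [h1]
  symm
  apply Finset.sum_subset (by simp)
  intro i _ hi
  simp only [Finset.mem_range, not_lt] at hi
  exact hN i hi

lemma netX {b : ℕ} (hb : 2 ≤ b) (l : ℕ) : ∀ (y : ℕ → ℕ), (∀ i, y i < b) →
    (0 ≤ ∑ i ∈ Finset.range l, (y i : ℝ) / (b : ℝ) ^ (i + 1) ∧
     ∑ i ∈ Finset.range l, (y i : ℝ) / (b : ℝ) ^ (i + 1) < 1 ∧
     ∀ n, realDigit b (∑ i ∈ Finset.range l, (y i : ℝ) / (b : ℝ) ^ (i + 1)) n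
        = if n < l then y n else 0) := by
  induction l with
  | zero => intro y _; simp [realDigit]
  | succ l ih =>
    intro y hy
    obtain ⟨h0, h1, hd⟩ := ih (fun i => y (i + 1)) (fun i => hy _)
    have hb0 : (0 : ℝ) < b := by positivity
    set x' := ∑ i ∈ Finset.range l, (y (i + 1) : ℝ) / (b : ℝ) ^ (i + 1) with hx'
    have hx : ∑ i ∈ Finset.range (l + 1), (y i : ℝ) / (b : ℝ) ^ (i + 1) = (y 0 + x') / b := by
      rw [Finset.sum_range_succ', hx', add_div, Finset.sum_div, add_comm]
      congr 1
      · simp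
      · apply Finset.sum_congr rfl
        intro i _
        rw [div_div, ← pow_succ]
    rw [hx]
    have hy0 : (y 0 : ℝ) + 1 ≤ b := by exact_mod_cast hy 0
    refine ⟨by positivity, ?_, ?_⟩
    · rw [div_lt_one hb0]; linarith
    · intro n
      cases n with
      | zero =>
        have : ⌊(y 0 + x') / (b : ℝ) * (b : ℝ) ^ (0 + 1)⌋ = (y 0 : ℤ) := by
          rw [Int.floor_eq_iff]
          have : (y 0 + x') / (b : ℝ) * (b : ℝ) ^ (0 + 1) = y 0 + x' := by rw [zero_add, pow_one]; field_simp
          rw [this]; push_cast; constructor <;> linarith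
        rw [realDigit, this]
        have h := hy 0
        simp only [Nat.zero_lt_succ, if_true]
        rw [← Int.natCast_mod, Int.toNat_natCast, Nat.mod_eq_of_lt h]
      | succ n =>
        have e : (y 0 + x') / (b : ℝ) * (b : ℝ) ^ (n + 1 + 1)
            = x' * (b : ℝ) ^ (n + 1) + (((y 0 : ℤ) * b ^ n * b : ℤ) : ℝ) := by
          push_cast; field_simp; ring
        have := hd n
        rw [realDigit] at this ⊢
        rw [e, Int.floor_add_intCast, Int.add_mul_emod_self_right, this]
        simp

lemma wal1_eq {b : ℕ} [NeZero b] (k : ℕ) (x : ℝ) :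
    wal1 b k x = ZMod.stdAddChar
      (∑ i ∈ Finset.range k, (natDigit b k i : ZMod b) * (realDigit b x i : ZMod b)) := by
  have := ZMod.stdAddChar_coe (N := b)
    ((∑ i ∈ Finset.range k, natDigit b k i * realDigit b x i : ℕ) : ℤ)
  rw [wal1]
  push_cast at this ⊢
  rw [this]
  congr 1
  ring

def netY (b : ℕ) {s l d : ℕ} (G : Fin s → Matrix (Fin l) (Fin d) (ZMod b)) (m : ℕ) (j : Fin s)
    (i : ℕ) : ℕ :=
  if h : i < l then (((G j).mulVec (trunc b d m)) ⟨i, h⟩).val else 0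

lemma netY_lt {b : ℕ} (hb : 2 ≤ b) {s l d : ℕ} (G : Fin s → Matrix (Fin l) (Fin d) (ZMod b))
    (m : ℕ) (j : Fin s) (i : ℕ) : netY b G m j i < b := by
  have : NeZero b := ⟨by omega⟩
  unfold netY
  split_ifs
  · exact ZMod.val_lt _
  · omega

lemma netPoint_eq {b : ℕ} {s l d : ℕ} (G : Fin s → Matrix (Fin l) (Fin d) (ZMod b))
    (m : ℕ) (j : Fin s) : netPoint b G m j =
      ∑ i ∈ Finset.range l, (netY b G m j i : ℝ) / (b : ℝ) ^ (i + 1) := by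
  rw [netPoint, Finset.sum_range]
  apply Finset.sum_congr rfl
  intro i _
  simp [netY]

lemma netPoint_mem {b : ℕ} (hb : 2 ≤ b) {s l d : ℕ}
    (G : Fin s → Matrix (Fin l) (Fin d) (ZMod b)) (m : ℕ) : netPoint b G m ∈ unitCube s := by
  intro j _
  rw [netPoint_eq]
  have := netX hb l (netY b G m j) (netY_lt hb G m j)
  exact ⟨this.1, this.2.1⟩

def dualVec (b : ℕ) {s l d : ℕ} (G : Fin s → Matrix (Fin l) (Fin d) (ZMod b)) (k : Fin s → ℕ) :
    Fin d → ZMod b := ∑ j, (G j)ᵀ.mulVec (trunc b l (k j))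

lemma stdAddChar_sum {b : ℕ} [NeZero b] {ι : Type*} (t : Finset ι) (f : ι → ZMod b) :
    (ZMod.stdAddChar (∑ i ∈ t, f i) : ℂ) = ∏ i ∈ t, ZMod.stdAddChar (f i) := by
  classical
  induction t using Finset.induction_on with
  | empty => simp
  | insert i t hi ih => rw [Finset.sum_insert hi, Finset.prod_insert hi, AddChar.map_add_eq_mul, ih]

lemma wal_net {b : ℕ} [NeZero b] (hb : 2 ≤ b) {s l d : ℕ}
    (G : Fin s → Matrix (Fin l) (Fin d) (ZMod b)) (k : Fin s → ℕ) (m : ℕ) :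
    wal b k (netPoint b G m) = ZMod.stdAddChar (dualVec b G k ⬝ᵥ trunc b d m) := by
  rw [wal, dualVec, sum_dotProduct, stdAddChar_sum]
  apply Finset.prod_congr rfl
  intro j _
  rw [wal1_eq]
  congr 1
  have hX := (netX hb l (netY b G m j) (netY_lt hb G m j)).2.2
  rw [← netPoint_eq] at hX
  rw [sum_digits_eq hb (k j) _ l (by intro i hi; simp [hi])
    (by intro i hi; rw [hX, if_neg (by omega)]; simp)]
  rw [mulVec_transpose, ← dotProduct_mulVec, Finset.sum_range]
  apply Finset.sum_congr rfl
  intro i _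
  rw [hX, if_pos i.2]
  simp [netY, trunc]

lemma trunc_bij {b : ℕ} [NeZero b] (hb : 2 ≤ b) (d : ℕ) :
    Function.Bijective (fun m : Fin (b ^ d) => trunc b d m) := by
  rw [Fintype.bijective_iff_injective_and_card]
  refine ⟨?_, by simp⟩
  intro m m' h
  apply finFunctionFinEquiv.symm.injective
  funext i
  have := congrArg ZMod.val (congrFun h i)
  simp only [trunc] at this
  rw [ZMod.val_natCast_of_lt (natDigit_lt hb _ _), ZMod.val_natCast_of_lt (natDigit_lt hb _ _)] at this
  ext
  simpa [natDigit] using this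

def avgWal (b : ℕ) {s l d : ℕ} (G : Fin s → Matrix (Fin l) (Fin d) (ZMod b)) (k : Fin s → ℕ) : ℂ :=
  ((b : ℂ) ^ d)⁻¹ * ∑ m ∈ Finset.range (b ^ d), wal b k (netPoint b G m)

lemma avgWal_of_mem {b : ℕ} (hb : 2 ≤ b) {s l d : ℕ}
    (G : Fin s → Matrix (Fin l) (Fin d) (ZMod b)) (k : Fin s → ℕ) (hk : k ∈ dualNet b G) :
    avgWal b G k = 1 := by
  have : NeZero b := ⟨by omega⟩
  have hk' : dualVec b G k = 0 := hk
  have hb0 : (b : ℂ) ≠ 0 := by simp; omega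
  simp [avgWal, wal_net hb, hk']
  

lemma avgWal_of_not_mem {b : ℕ} (hb : 2 ≤ b) {s l d : ℕ}
    (G : Fin s → Matrix (Fin l) (Fin d) (ZMod b)) (k : Fin s → ℕ) (hk : k ∉ dualNet b G) :
    avgWal b G k = 0 := by
  have : NeZero b := ⟨by omega⟩
  have hk' : dualVec b G k ≠ 0 := hk
  set v := dualVec b G k
  rw [avgWal, Finset.sum_range]
  simp only [wal_net hb]
  rw [(trunc_bij hb d).sum_comp (fun t => (ZMod.stdAddChar (v ⬝ᵥ t) : ℂ))]
  let φ : (Fin d → ZMod b) →+ ZMod b :=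
    { toFun := fun t => v ⬝ᵥ t, map_zero' := by simp, map_add' := fun x y => dotProduct_add _ _ _ }
  let ψ : AddChar (Fin d → ZMod b) ℂ := ZMod.stdAddChar.compAddMonoidHom φ
  have hψ : ψ ≠ 1 := by
    intro h
    apply hk'
    funext i
    have h1 : ψ (Pi.single i 1) = 1 := by rw [h]; rfl
    have h2 : (ZMod.stdAddChar (v ⬝ᵥ Pi.single i 1) : ℂ) = ZMod.stdAddChar (0 : ZMod b) := by
      rw [AddChar.map_zero_eq_one]; exact h1
    have := ZMod.injective_stdAddChar h2
    simpa using this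
  have := AddChar.sum_eq_zero_of_ne_one hψ
  change ∑ t, (ZMod.stdAddChar (v ⬝ᵥ t) : ℂ) = 0 at this
  rw [this, mul_zero]

/-- the factor attached to the digit at place `i` -/
def wfac (b : ℕ) (a : ℝ) (i : ℕ) : ℝ := (b : ℝ) ^ (-(max ((i : ℝ) + 1 + a) 1) / 2)

lemma wfac_pos {b : ℕ} (hb : 2 ≤ b) (a : ℝ) (i : ℕ) : 0 < wfac b a i := by
  have : (0 : ℝ) < b := by positivity
  unfold wfac; positivity

lemma mdick_prod {b : ℕ} (hb : 2 ≤ b) (a : ℝ) (N k : ℕ) (hk : k < b ^ N) :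
    (b : ℝ) ^ (-(mdickWt b a k) / 2) =
      ∏ i : Fin N, if natDigit b k i ≠ 0 then wfac b a i else 1 := by
  have hb0 : (0 : ℝ) < b := by positivity
  rw [mdickWt, sum_digits_eq hb k _ N (by intro i hi; simp [hi])
    (by
      intro i hi
      have := natDigit_eq_zero (lt_of_lt_of_le hk (Nat.pow_le_pow_right (by omega) hi))
      simp [this]), ← Finset.sum_neg_distrib, Finset.sum_div, Real.rpow_sum_of_pos hb0,
      Finset.prod_range]
  apply Finset.prod_congr rfl
  intro i _
  split_ifs <;> simp [wfac]

lemma sum_one_dim {b : ℕ} (hb : 2 ≤ b) (a : ℝ) (N : ℕ) :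
    ∑ k ∈ Finset.range (b ^ N), (b : ℝ) ^ (-(mdickWt b a k) / 2) =
      ∏ i : Fin N, (1 + ((b : ℝ) - 1) * wfac b a i) := by
  have h1 : ∀ i : Fin N, (1 + ((b : ℝ) - 1) * wfac b a i) =
      ∑ c : Fin b, if (c : ℕ) ≠ 0 then wfac b a i else 1 := by
    intro i
    obtain ⟨n, rfl⟩ : ∃ n, b = n + 1 := ⟨b - 1, by omega⟩
    rw [Fin.sum_univ_succ]
    simp
  simp_rw [h1]
  rw [Fintype.prod_sum, Finset.sum_range, ← finFunctionFinEquiv.symm.sum_comp]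
  apply Finset.sum_congr rfl
  intro k _
  rw [mdick_prod hb a N k k.2]
  rfl

lemma sum_wfac {b : ℕ} (hb : 2 ≤ b) (a : ℝ) (N : ℕ) :
    ∑ i ∈ Finset.range N, wfac b a i ≤
      ((Finset.range N).filter (fun i : ℕ => (i : ℝ) + 1 + a ≤ 1)).card +
      (1 - (b : ℝ) ^ (-(max ((N : ℝ) + a) 0) / 2)) * (2 / Real.log b) := by
  have hb1 : (1 : ℝ) < b := by exact_mod_cast hb
  have hb0 : (0 : ℝ) < b := by linarith
  have hlog : 0 < Real.log b := Real.log_pos hb1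
  induction N with
  | zero =>
    simp only [Finset.range_zero, Finset.sum_empty, Finset.filter_empty, Finset.card_empty,
      Nat.cast_zero, zero_add]
    apply mul_nonneg _ (by positivity)
    rw [sub_nonneg]
    apply Real.rpow_le_one_of_one_le_of_nonpos hb1.le
    have := le_max_right a 0
    linarith
  | succ N ih =>
    rw [Finset.sum_range_succ, Finset.range_add_one, Finset.filter_insert]
    by_cases h : (N : ℝ) + 1 + a ≤ 1
    · rw [if_pos h, Finset.card_insert_of_notMem (by simp)]
      have hw : wfac b a N ≤ 1 := by
        apply Real.rpow_le_one_of_one_le_of_nonpos hb1.le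
        have := le_max_right ((N : ℝ) + 1 + a) 1
        linarith
      have hm : (b : ℝ) ^ (-(max (((N + 1 : ℕ) : ℝ) + a) 0) / 2) ≤
          (b : ℝ) ^ (-(max ((N : ℝ) + a) 0) / 2) := by
        apply Real.rpow_le_rpow_of_exponent_le hb1.le
        have : max ((N : ℝ) + a) 0 ≤ max (((N + 1 : ℕ) : ℝ) + a) 0 := by
          apply max_le_max _ le_rfl
          push_cast; linarith
        linarith
      have : (1 - (b : ℝ) ^ (-(max ((N : ℝ) + a) 0) / 2)) * (2 / Real.log b) ≤
        (1 - (b : ℝ) ^ (-(max (((N + 1 : ℕ) : ℝ) + a) 0) / 2)) * (2 / Real.log b) := by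
        apply mul_le_mul_of_nonneg_right _ (by positivity)
        linarith
      push_cast at this ⊢
      linarith
    · rw [if_neg h]
      push Not at h
      have e1 : max ((N : ℝ) + a) 0 = N + a := max_eq_left (by linarith)
      have e2 : max (((N + 1 : ℕ) : ℝ) + a) 0 = N + 1 + a := by
        push_cast; exact max_eq_left (by linarith)
      have e3 : max ((N : ℝ) + 1 + a) 1 = N + 1 + a := max_eq_left h.le
      rw [e1] at ih
      rw [e2]
      unfold wfac at ih ⊢
      rw [e3]
      have hs : (b : ℝ) ^ (-((N : ℝ) + a) / 2) =
          (b : ℝ) ^ (-((N : ℝ) + 1 + a) / 2) * (b : ℝ) ^ (1 / 2 : ℝ) := by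
        rw [← Real.rpow_add hb0]; congr 1; ring
      have hq : Real.log b / 2 ≤ (b : ℝ) ^ (1 / 2 : ℝ) - 1 := by
        have h1 := Real.log_le_sub_one_of_pos (show 0 < (b : ℝ) ^ (1 / 2 : ℝ) by positivity)
        rw [Real.log_rpow hb0] at h1
        linarith
      rw [hs] at ih
      set q := (b : ℝ) ^ (1 / 2 : ℝ)
      have hp : 0 < (b : ℝ) ^ (-((N : ℝ) + 1 + a) / 2) := by positivity
      set p := (b : ℝ) ^ (-((N : ℝ) + 1 + a) / 2)
      have : p ≤ p * (q - 1) * (2 / Real.log b) := by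
        have h3 : 1 ≤ (q - 1) * (2 / Real.log b) := by
          rw [mul_div_assoc', le_div_iff₀ hlog]; linarith
        calc p = p * 1 := by ring
          _ ≤ p * ((q - 1) * (2 / Real.log b)) := by gcongr
          _ = _ := by ring
      linarith

lemma sum_wfac_le {b : ℕ} (hb : 2 ≤ b) (a : ℝ) (N : ℕ) :
    ∑ i ∈ Finset.range N, wfac b a i ≤ negCount a + 2 / Real.log b := by
  have hb1 : (1 : ℝ) < b := by exact_mod_cast hb
  have hlog : 0 < Real.log b := Real.log_pos hb1
  have h := sum_wfac hb a N
  have h1 : ((Finset.range N).filter (fun i : ℕ => (i : ℝ) + 1 + a ≤ 1)).card ≤ negCount a := by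
    rw [negCount, ← Finset.card_image_of_injective _ Nat.succ_injective, ← Set.ncard_coe_finset]
    apply Set.ncard_le_ncard
    · intro i hi
      simp only [Finset.coe_image, Finset.coe_filter, Set.mem_image, Set.mem_setOf_eq] at hi
      obtain ⟨n, ⟨_, hn⟩, rfl⟩ := hi
      refine ⟨Nat.succ_pos _, ?_⟩
      push_cast
      exact hn
    · apply (Set.finite_Iic ⌊1 - a⌋₊).subset
      rintro i ⟨_, hi⟩
      exact Nat.le_floor (by linarith)
  have h2 : ((Finset.range N).filter (fun i : ℕ => (i : ℝ) + 1 + a ≤ 1)).card ≤ (negCount a : ℝ) := by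
    exact_mod_cast h1
  have h3 : 0 < (b : ℝ) ^ (-(max ((N : ℝ) + a) 0) / 2) := by positivity
  have h4 : (1 - (b : ℝ) ^ (-(max ((N : ℝ) + a) 0) / 2)) * (2 / Real.log b) ≤ 1 * (2 / Real.log b) := by
    apply mul_le_mul_of_nonneg_right _ (by positivity)
    linarith
  linarith

lemma one_dim_le {b : ℕ} (hb : 2 ≤ b) (a : ℝ) (N : ℕ) :
    ∑ k ∈ Finset.range (b ^ N), (b : ℝ) ^ (-(mdickWt b a k) / 2) ≤
      Real.exp (((b : ℝ) - 1) * (negCount a + 2 / Real.log b)) := by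
  have hb1 : (1 : ℝ) < b := by exact_mod_cast hb
  rw [sum_one_dim hb, ← Finset.prod_range (fun i => (1 + ((b : ℝ) - 1) * wfac b a i))]
  calc ∏ i ∈ Finset.range N, (1 + ((b : ℝ) - 1) * wfac b a i)
      ≤ ∏ i ∈ Finset.range N, Real.exp (((b : ℝ) - 1) * wfac b a i) := by
        apply Finset.prod_le_prod
        · intro i _
          have := wfac_pos hb a i
          have : 0 ≤ ((b : ℝ) - 1) * wfac b a i := mul_nonneg (by linarith) this.le
          linarith
        · intro i _
          rw [add_comm]
          exact Real.add_one_le_exp _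
    _ = Real.exp (((b : ℝ) - 1) * ∑ i ∈ Finset.range N, wfac b a i) := by
        rw [← Real.exp_sum, Finset.mul_sum]
    _ ≤ _ := by
        apply Real.exp_le_exp.mpr
        exact mul_le_mul_of_nonneg_left (sum_wfac_le hb a N) (by linarith)

lemma multi_le {b : ℕ} (hb : 2 ≤ b) {s : ℕ} (a : Fin s → ℝ) (F : Finset (Fin s → ℕ)) :
    ∑ k ∈ F, (b : ℝ) ^ (-(mdickWtV b a k) / 2) ≤
      Real.exp (((b : ℝ) - 1) * ∑ j, (negCount (a j) : ℝ) +
        2 * ((b : ℝ) - 1) * s / Real.log b) := by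
  have hb1 : (1 : ℝ) < b := by exact_mod_cast hb
  have hb0 : (0 : ℝ) < b := by linarith
  set N := F.sup (fun k => Finset.univ.sup k) with hN
  have hsub : F ⊆ Fintype.piFinset (fun _ : Fin s => Finset.range (b ^ N)) := by
    intro k hk
    rw [Fintype.mem_piFinset]
    intro j
    rw [Finset.mem_range]
    have h1 : k j ≤ Finset.univ.sup k := Finset.le_sup (Finset.mem_univ j)
    have h2 : Finset.univ.sup k ≤ N := Finset.le_sup (f := fun k => Finset.univ.sup k) hk
    exact lt_of_le_of_lt (h1.trans h2) (Nat.lt_pow_self (by omega))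
  calc _ ≤ ∑ k ∈ Fintype.piFinset (fun _ : Fin s => Finset.range (b ^ N)),
        (b : ℝ) ^ (-(mdickWtV b a k) / 2) := by
        apply Finset.sum_le_sum_of_subset_of_nonneg hsub
        intros; positivity
    _ = ∑ k ∈ Fintype.piFinset (fun _ : Fin s => Finset.range (b ^ N)),
        ∏ j, (b : ℝ) ^ (-(mdickWt b (a j) (k j)) / 2) := by
        apply Finset.sum_congr rfl
        intro k _
        rw [mdickWtV, ← Finset.sum_neg_distrib, Finset.sum_div, Real.rpow_sum_of_pos hb0]
    _ = ∏ j, ∑ k ∈ Finset.range (b ^ N), (b : ℝ) ^ (-(mdickWt b (a j) k) / 2) := by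
        rw [Finset.prod_univ_sum]
    _ ≤ ∏ j, Real.exp (((b : ℝ) - 1) * (negCount (a j) + 2 / Real.log b)) := by
        apply Finset.prod_le_prod
        · intros; positivity
        · intro j _
          exact one_dim_le hb (a j) N
    _ = _ := by
        rw [← Real.exp_sum, ← Finset.mul_sum, Finset.sum_add_distrib]
        congr 1
        simp
        ring

lemma mdickWtV_nonneg {b : ℕ} {s : ℕ} (a : Fin s → ℝ) (k : Fin s → ℕ) : 0 ≤ mdickWtV b a k := by
  apply Finset.sum_nonneg
  intro j _
  apply Finset.sum_nonneg
  intro i _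
  split_ifs
  · exact le_trans zero_le_one (le_max_right _ _)
  · exact le_rfl

lemma wal_zero {b : ℕ} {s : ℕ} (x : Fin s → ℝ) : wal b 0 x = 1 := by
  simp [wal, wal1]

lemma intBox_eq {b : ℕ} {s : ℕ} (f : (Fin s → ℝ) → ℝ) : (intBox s f : ℂ) = walshCoeff b f 0 := by
  simp only [intBox, walshCoeff, wal_zero, map_one, mul_one]
  exact integral_ofReal.symm

lemma zero_mem_dual {b : ℕ} {s l d : ℕ} (G : Fin s → Matrix (Fin l) (Fin d) (ZMod b)) :
    (0 : Fin s → ℕ) ∈ dualNet b G := by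
  have : trunc b l 0 = 0 := by funext i; simp [trunc, natDigit]
  simp [dualNet, this]

lemma qmc_hasSum {b : ℕ} (hb : 2 ≤ b) {s l d : ℕ} (G : Fin s → Matrix (Fin l) (Fin d) (ZMod b))
    (f : (Fin s → ℝ) → ℝ)
    (hf : ∀ x ∈ unitCube s, HasSum (fun k : Fin s → ℕ => walshCoeff b f k * wal b k x) ((f x : ℂ))) :
    HasSum (fun k => walshCoeff b f k * avgWal b G k) (qmcNet b G f : ℂ) := by
  have h := (hasSum_sum (s := Finset.range (b ^ d)) (fun m _ => hf _ (netPoint_mem hb G m))).mul_left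
    (((b : ℂ) ^ d)⁻¹)
  have e1 : (fun k => walshCoeff b f k * avgWal b G k) = fun k => ((b : ℂ) ^ d)⁻¹ *
      ∑ m ∈ Finset.range (b ^ d), walshCoeff b f k * wal b k (netPoint b G m) := by
    funext k
    rw [avgWal, ← Finset.mul_sum]
    ring
  have e2 : (qmcNet b G f : ℂ) =
      ((b : ℂ) ^ d)⁻¹ * ∑ m ∈ Finset.range (b ^ d), (f (netPoint b G m) : ℂ) := by
    simp [qmcNet]
  rw [e1, e2]
  exact h

lemma err_le {b : ℕ} (hb : 2 ≤ b) {s l d : ℕ} (G : Fin s → Matrix (Fin l) (Fin d) (ZMod b))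
    (a : Fin s → ℝ) (f : (Fin s → ℝ) → ℝ) (hf : MemW' b a f) (hn : normW' b a f ≤ 1)
    (δ : ℝ) (hδ : δ = sInf (mdickWtV b a '' (dualNet b G \ {0}))) :
    |intBox s f - qmcNet b G f| ≤ Real.exp (((b : ℝ) - 1) * ∑ j, (negCount (a j) : ℝ) +
        2 * ((b : ℝ) - 1) * s / Real.log b) * (b : ℝ) ^ (-δ / 2) := by
  have hb1 : (1 : ℝ) < b := by exact_mod_cast hb
  have hb0 : (0 : ℝ) < b := by linarith
  set g : (Fin s → ℕ) → ℝ := fun k => (b : ℝ) ^ (-(mdickWtV b a k) / 2) with hg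
  have hg0 : 0 ≤ g := fun k => by simp only [hg]; positivity
  have hgs := summable_of_sum_le hg0 (multi_le hb a)
  have hgt := Real.tsum_le_of_sum_le hg0 (multi_le hb a)
  have h1 := (qmc_hasSum hb G f hf.1).sub (hasSum_ite_eq (0 : Fin s → ℕ) (walshCoeff b f 0))
  have hc : ∀ k, ‖walshCoeff b f k‖ ≤ (b : ℝ) ^ (-(mdickWtV b a k)) := by
    intro k
    have := (le_ciSup hf.2 k).trans hn
    rw [Real.rpow_neg hb0.le, ← one_div, le_div_iff₀ (by positivity)]
    exact this
  have h2 := h1.norm_le_of_bounded (hgs.hasSum.mul_right ((b : ℝ) ^ (-δ / 2))) (by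
    intro k
    by_cases hk0 : k = 0
    · subst hk0
      rw [avgWal_of_mem hb G _ (zero_mem_dual G)]
      simp only [mul_one, if_true, sub_self, norm_zero]
      exact mul_nonneg (hg0 _) (by positivity)
    · rw [if_neg hk0, sub_zero]
      by_cases hk : k ∈ dualNet b G
      · rw [avgWal_of_mem hb G _ hk, mul_one]
        refine (hc k).trans ?_
        have hd : δ ≤ mdickWtV b a k := by
          rw [hδ]
          apply csInf_le
          · refine ⟨0, ?_⟩
            rintro _ ⟨k, _, rfl⟩
            exact mdickWtV_nonneg a k
          · exact ⟨k, ⟨hk, hk0⟩, rfl⟩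
        simp only [hg]
        rw [← Real.rpow_add hb0]
        apply Real.rpow_le_rpow_of_exponent_le hb1.le
        linarith
      · rw [avgWal_of_not_mem hb G _ hk, mul_zero, norm_zero]
        exact mul_nonneg (hg0 _) (by positivity))
  rw [← intBox_eq, ← Complex.ofReal_sub, Complex.norm_real, Real.norm_eq_abs, abs_sub_comm] at h2
  refine h2.trans ?_
  exact mul_le_mul_of_nonneg_right hgt (by positivity)

/-- for every digital net `P`, the worst-case error on `W'_{s,a}` satisfies
`e^wor(P, W'_{s,a}) ≤ C_s · exp(-δ_{P^⊥}·(log b)/2)` with the explicit constant `C_s`. -/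
theorem statement14 (b : ℕ) (hb : 2 ≤ b) (s : ℕ) (hs : 0 < s)
    (a : ℕ → ℝ) (ha : Monotone a)
    (S Cs : ℝ) (hS : S = ((b : ℝ) - 1) * ∑ j : Fin s, (negCount (a j) : ℝ))
    (hCs : Cs = Real.exp (S + Real.log b / 2 + 2 * ((b : ℝ) - 1) * s / Real.log b) *
      (1 - Real.exp (-(Real.log b) / 2))⁻¹)
    (l d : ℕ) (hdl : d ≤ l) (G : Fin s → Matrix (Fin l) (Fin d) (ZMod b))
    (δ : ℝ)
    (hδ : δ = sInf (mdickWtV b (fun j : Fin s => a j) '' (dualNet b G \ {0}))) :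
    worstErr s {f | MemW' b (fun j : Fin s => a j) f} (normW' b (fun j : Fin s => a j))
        (qmcNet b G) ≤
      ENNReal.ofReal (Cs * Real.exp (-δ * Real.log b / 2)) := by
  unfold worstErr
  refine iSup_le fun f => iSup_le fun hf => iSup_le fun hn => ?_
  apply ENNReal.ofReal_le_ofReal
  refine (err_le hb G _ f hf hn δ hδ).trans ?_
  have hb1 : (1 : ℝ) < b := by exact_mod_cast hb
  have hb0 : (0 : ℝ) < b := by linarith
  have hlog : 0 < Real.log b := Real.log_pos hb1
  have e : (b : ℝ) ^ (-δ / 2) = Real.exp (-δ * Real.log b / 2) := by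
    rw [Real.rpow_def_of_pos hb0]; congr 1; ring
  rw [e, ← hS, hCs]
  apply mul_le_mul_of_nonneg_right _ (Real.exp_pos _).le
  have hx : Real.exp (-(Real.log b) / 2) < 1 := by
    rw [Real.exp_lt_one_iff]; linarith
  have h1 : 1 ≤ (1 - Real.exp (-(Real.log b) / 2))⁻¹ := by
    apply (one_le_inv₀ (by linarith)).mpr
    have := Real.exp_pos (-(Real.log b) / 2)
    linarith
  calc Real.exp (S + 2 * ((b : ℝ) - 1) * s / Real.log b)
      ≤ Real.exp (S + Real.log b / 2 + 2 * ((b : ℝ) - 1) * s / Real.log b) := by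
        apply Real.exp_le_exp.mpr; linarith
    _ ≤ _ := le_mul_of_one_le_right (Real.exp_pos _).le h1

end
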